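/- The Jacobi theta constant θ(τ) = Σ_{n∈ℤ} e^{πin²τ} satisfies the fourth-order nonlinear ODE: for every τ ∈ ℍ, θ³(θθ_{ττ} − 3θ_τ²)θ_{ττττ} − θ⁴θ_{τττ}² + 2θ²θ_τ(θθ_{ττ} + 12θ_τ²)θ_{τττ} + θ³θ_{ττ}³ − 24θ²θ_τ²θ_{ττ}² − 18θθ_τ⁴θ_{ττ} + 18θ_τ⁶ = 0, where subscripts denote ordinary derivatives with respect to τ. -/

import Mathlib

open Complex

noncomputable section

/-- The Jacobi theta constant `θ(τ) = Σ_{n∈ℤ} e^{πin²τ}`. -/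
def θ : ℂ → ℂ := fun τ => ∑' n : ℤ, Complex.exp (Real.pi * Complex.I * (n : ℂ) ^ 2 * τ)

/-!
Because of the transformation laws of `θ₂⁸`, `θ₃⁸` and `θ₄⁸`, the defects in the Darboux–Halphen
system for the logarithmic derivatives of `θ₂`, `θ₃` and `θ₄` are three holomorphic functions of
weight four which the modular group permutes and which vanish at `i∞`. Their first two power sums
are cusp forms of level one and weights four and eight, hence zero, and this forces the defects to
vanish. The equation for `θ = θ₃` is what remains of the Halphen system after eliminating the other
two logarithmic derivatives.
-/

open Filter Topology
open UpperHalfPlane hiding I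
open scoped Real ModularForm MatrixGroups

local notation "ℍₒ" => upperHalfPlaneSet
local notation "I∞" => comap Complex.im atTop

/-! ### Elimination in the Darboux–Halphen system -/

section Elimination

variable {𝕜 : Type*} [NontriviallyNormedField 𝕜] {Ω : Set 𝕜}

lemma eqOn_deriv_of_eqOn_of_hasDerivAt {f g g' : 𝕜 → 𝕜} (hΩ : IsOpen Ω) (hfg : Ω.EqOn f g)
    (hg : ∀ x ∈ Ω, HasDerivAt g (g' x) x) : Ω.EqOn (deriv f) g' := fun x hx =>
  (hfg.deriv hΩ hx).trans (hg x hx).deriv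

lemma iterated_deriv_of_autonomous_system {t u v s : 𝕜 → 𝕜} (hΩ : IsOpen Ω)
    (ht : ∀ x ∈ Ω, HasDerivAt t (t x * u x) x)
    (hu : ∀ x ∈ Ω, HasDerivAt u (v x + 2 * u x ^ 2) x)
    (hv : ∀ x ∈ Ω, HasDerivAt v (4 * s x * v x) x)
    (hs : ∀ x ∈ Ω, HasDerivAt s (4 * u x * s x - 4 * u x ^ 2 - 2 * v x) x) :
    ∀ x ∈ Ω, deriv t x = t x * u x ∧
      deriv (deriv t) x = t x * (v x + 3 * u x ^ 2) ∧
      deriv (deriv (deriv t)) x = t x * (15 * u x ^ 3 + 7 * u x * v x + 4 * s x * v x) ∧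
      deriv (deriv (deriv (deriv t))) x = t x * (105 * u x ^ 4 + 50 * u x ^ 2 * v x - v x ^ 2 +
        48 * u x * s x * v x + 16 * s x ^ 2 * v x) := by
  have h₁ : Ω.EqOn (deriv t) fun x => t x * u x := fun x hx => (ht x hx).deriv
  have h₂ : Ω.EqOn (deriv (deriv t)) fun x => t x * (v x + 3 * u x ^ 2) :=
    eqOn_deriv_of_eqOn_of_hasDerivAt hΩ h₁ fun x hx =>
      ((ht x hx).fun_mul (hu x hx)).congr_deriv (by ring)
  have h₃ : Ω.EqOn (deriv (deriv (deriv t)))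
      fun x => t x * (15 * u x ^ 3 + 7 * u x * v x + 4 * s x * v x) :=
    eqOn_deriv_of_eqOn_of_hasDerivAt hΩ h₂ fun x hx =>
      ((ht x hx).fun_mul ((hv x hx).fun_add (((hu x hx).fun_pow 2).const_mul 3))).congr_deriv
        (by push_cast; ring)
  have h₄ := eqOn_deriv_of_eqOn_of_hasDerivAt hΩ h₃ fun x hx =>
    (ht x hx).fun_mul (((((hu x hx).fun_pow 3).const_mul 15).fun_add
      (((hu x hx).const_mul 7).fun_mul (hv x hx))).fun_add
        (((hs x hx).const_mul 4).fun_mul (hv x hx)))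
  exact fun x hx => ⟨h₁ hx, h₂ hx, h₃ hx, (h₄ hx).trans (by push_cast; ring)⟩

/-- In terms of `u = a`, `v = -2 (a - b) (a - c)` and `s = b + c`, the Halphen system becomes an
autonomous system in which `v' / v = 4 s`, and the equation is an identity between polynomials in
`u`, `v` and `s`. -/
theorem fourth_order_ODE_of_halphen {t a b c : 𝕜 → 𝕜} (hΩ : IsOpen Ω)
    (ht : ∀ x ∈ Ω, HasDerivAt t (t x * a x) x)
    (ha : ∀ x ∈ Ω, HasDerivAt a (2 * (a x * b x + a x * c x - b x * c x)) x)
    (hb : ∀ x ∈ Ω, HasDerivAt b (2 * (b x * c x + b x * a x - c x * a x)) x)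
    (hc : ∀ x ∈ Ω, HasDerivAt c (2 * (c x * a x + c x * b x - a x * b x)) x) :
    ∀ x ∈ Ω, t x ^ 3 * (t x * deriv (deriv t) x - 3 * (deriv t x) ^ 2) *
          deriv (deriv (deriv (deriv t))) x -
        t x ^ 4 * (deriv (deriv (deriv t)) x) ^ 2 +
        2 * t x ^ 2 * deriv t x * (t x * deriv (deriv t) x + 12 * (deriv t x) ^ 2) *
          deriv (deriv (deriv t)) x +
        t x ^ 3 * (deriv (deriv t) x) ^ 3 -
        24 * t x ^ 2 * (deriv t x) ^ 2 * (deriv (deriv t) x) ^ 2 -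
        18 * t x * (deriv t x) ^ 4 * deriv (deriv t) x +
        18 * (deriv t x) ^ 6 = 0 := by
  intro x hx
  obtain ⟨h₁, h₂, h₃, h₄⟩ := iterated_deriv_of_autonomous_system
    (u := a) (v := fun x => -2 * ((a x - b x) * (a x - c x))) (s := fun x => b x + c x) hΩ ht
    (fun x hx => (ha x hx).congr_deriv (by ring))
    (fun x hx => ((((ha x hx).fun_sub (hb x hx)).fun_mul
      ((ha x hx).fun_sub (hc x hx))).const_mul (-2)).congr_deriv (by ring))
    (fun x hx => ((hb x hx).fun_add (hc x hx)).congr_deriv (by ring)) x hx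
  rw [h₁, h₂, h₃, h₄]
  ring

end Elimination

/-! ### Functions on the upper half-plane -/

section HalfPlane

lemma neg_one_div_mem_upperHalfPlaneSet {τ : ℂ} (hτ : τ ∈ ℍₒ) : -1 / τ ∈ ℍₒ := by
  have him : 0 < (-τ)⁻¹.im := im_inv_neg_coe_pos ⟨τ, hτ⟩
  rwa [inv_neg, ← one_div, ← neg_div] at him

lemma ne_zero_of_mem_upperHalfPlaneSet {τ : ℂ} (hτ : τ ∈ ℍₒ) : τ ≠ 0 :=
  ne_zero ⟨τ, hτ⟩

lemma eventually_mem_upperHalfPlaneSet : ∀ᶠ τ in I∞, τ ∈ ℍₒ :=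
  preimage_mem_comap (Ioi_mem_atTop 0)

instance neBot_comap_im_atTop : NeBot I∞ :=
  NeBot.comap_of_surj atTop_neBot Complex.im_surjective

variable {E : Type*} [NormedAddCommGroup E] [NormedSpace ℂ E] {f g : ℂ → E} {τ : ℂ}

lemma deriv_add_one_of_eqOn (h : ∀ z ∈ ℍₒ, f (z + 1) = g z) (hτ : τ ∈ ℍₒ) :
    deriv f (τ + 1) = deriv g τ := by
  rw [← deriv_comp_add_const]
  exact Set.EqOn.deriv h isOpen_upperHalfPlaneSet hτ

lemma deriv_neg_one_div_of_eqOn (hf : DifferentiableOn ℂ f ℍₒ)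
    (h : ∀ z ∈ ℍₒ, f (-1 / z) = g z) (hτ : τ ∈ ℍₒ) :
    deriv f (-1 / τ) = τ ^ 2 • deriv g τ := by
  have hτ₀ := ne_zero_of_mem_upperHalfPlaneSet hτ
  have hS : HasDerivAt (fun z : ℂ => -1 / z) (1 / τ ^ 2) τ := by
    simpa [neg_div] using (hasDerivAt_inv hτ₀).fun_neg
  have hfS := (hf.differentiableAt (isOpen_upperHalfPlaneSet.mem_nhds
    (neg_one_div_mem_upperHalfPlaneSet hτ))).hasDerivAt.scomp τ hS
  rw [← Set.EqOn.deriv (f := f ∘ fun z => -1 / z) h isOpen_upperHalfPlaneSet hτ, hfS.deriv,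
    smul_smul, mul_one_div_cancel (pow_ne_zero 2 hτ₀), one_smul]

lemma eventually_forall_closedBall_comap_im_atTop {p : ℂ → Prop} (r : ℝ) (hp : ∀ᶠ τ in I∞, p τ) :
    ∀ᶠ τ in I∞, ∀ w ∈ Metric.closedBall τ r, p w := by
  obtain ⟨A, hA⟩ := eventually_atTop.mp (eventually_comap.mp hp)
  filter_upwards [tendsto_comap.eventually_ge_atTop (A + r)] with τ hτ w hw
  have him : |(w - τ).im| ≤ r := (abs_im_le_norm _).trans (mem_closedBall_iff_norm.mp hw)
  rw [sub_im] at him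
  exact hA w.im (by linarith [(abs_le.mp him).1]) w rfl

/-- By Cauchy's estimate on discs of radius one. -/
lemma tendsto_deriv_comap_im_atTop {c : E} (hf : DifferentiableOn ℂ f ℍₒ)
    (h : Tendsto f I∞ (𝓝 c)) : Tendsto (deriv f) I∞ (𝓝 0) := by
  rw [Metric.tendsto_nhds] at h ⊢
  intro ε hε
  filter_upwards [eventually_forall_closedBall_comap_im_atTop 1 (h (ε / 2) (half_pos hε)),
    eventually_forall_closedBall_comap_im_atTop 1 eventually_mem_upperHalfPlaneSet]
    with τ hdist hmem
  have hdiff : DiffContOnCl ℂ (fun w => f w - c) (Metric.ball τ 1) := by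
    refine DifferentiableOn.diffContOnCl ?_
    rw [closure_ball _ one_ne_zero]
    exact (hf.mono hmem).sub_const c
  have hcauchy := norm_deriv_le_of_forall_mem_sphere_norm_le one_pos hdiff fun w hw =>
    (dist_eq_norm (f w) c ▸ hdist w (Metric.sphere_subset_closedBall hw)).le
  rw [deriv_sub_const] at hcauchy
  rw [dist_zero_right]
  linarith

lemma tendsto_logDeriv_comap_im_atTop {f : ℂ → ℂ} {c : ℂ} (hf : DifferentiableOn ℂ f ℍₒ)
    (h : Tendsto f I∞ (𝓝 c)) (hc : c ≠ 0) : Tendsto (logDeriv f) I∞ (𝓝 0) := by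
  rw [← zero_div c]
  exact (tendsto_deriv_comap_im_atTop hf h).div h hc

lemma exists_sq_eq_and_forall_eq_mul {f g : ℂ → ℂ} {a : ℂ} (hf : DifferentiableOn ℂ f ℍₒ)
    (hg : DifferentiableOn ℂ g ℍₒ) (h : ∀ τ ∈ ℍₒ, f τ ^ 2 = a * g τ ^ 2) :
    ∃ ν : ℂ, ν ^ 2 = a ∧ ∀ τ ∈ ℍₒ, f τ = ν * g τ := by
  obtain ⟨μ, hμ⟩ := IsAlgClosed.exists_pow_nat_eq a two_pos
  have han (ν : ℂ) : AnalyticOnNhd ℂ (fun τ => f τ - ν * g τ) ℍₒ :=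
    (hf.sub (hg.const_mul ν)).analyticOnNhd isOpen_upperHalfPlaneSet
  have hmul : ∀ τ ∈ ℍₒ, (f τ - μ * g τ) * (f τ - -μ * g τ) = 0 := fun τ hτ => by
    linear_combination h τ hτ - g τ ^ 2 * hμ
  rcases (han μ).eq_zero_or_eq_zero_of_mul_eq_zero (han (-μ)) hmul
    (convex_halfSpace_im_gt 0).isPreconnected with h₀ | h₀
  · exact ⟨μ, hμ, fun τ hτ => sub_eq_zero.mp (h₀ τ hτ)⟩
  · exact ⟨-μ, (neg_sq μ).trans hμ, fun τ hτ => sub_eq_zero.mp (h₀ τ hτ)⟩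

lemma tendsto_cexp_mul_I_comap_im_atTop {c : ℝ} (hc : 0 < c) :
    Tendsto (fun τ : ℂ => cexp (I * c * τ)) I∞ (𝓝 0) := by
  rw [tendsto_zero_iff_norm_tendsto_zero]
  have hnorm (τ : ℂ) : ‖cexp (I * c * τ)‖ = Real.exp (-(c * τ.im)) := by simp [norm_exp]
  simp only [hnorm]
  exact Real.tendsto_exp_neg_atTop_nhds_zero.comp (tendsto_comap.const_mul_atTop hc)

lemma tendsto_tsum_cexp_mul_I_comap_im_atTop {ι : Type*} {m : ι → ℝ} {s : Finset ι}
    (hm : ∀ n, 0 ≤ m n) (hs : ∀ n, m n = 0 ↔ n ∈ s) (hsum : Summable fun n => Real.exp (-m n)) :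
    Tendsto (fun τ : ℂ => ∑' n, cexp (I * m n * τ)) I∞ (𝓝 s.card) := by
  classical
  have hcard : ∑' n, (if n ∈ s then (1 : ℂ) else 0) = s.card := by
    rw [tsum_eq_sum fun n hn => if_neg hn]
    simp
  rw [← hcard]
  refine tendsto_tsum_of_dominated_convergence hsum (fun n => ?_) ?_
  · split_ifs with hn
    · simp [(hs n).mpr hn]
    · exact tendsto_cexp_mul_I_comap_im_atTop ((hm n).lt_of_ne' (mt (hs n).mp hn))
  · filter_upwards [tendsto_comap.eventually_ge_atTop 1] with τ hτ n
    simpa [norm_exp] using le_mul_of_one_le_right (hm n) hτ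

end HalfPlane

/-! ### Modular forms of level one -/

/-- Holomorphic functions on the upper half-plane satisfying the transformation laws of a modular
form of weight `k` for `SL₂(ℤ)`; no growth condition at `i∞` is imposed. The function is defined on
all of `ℂ`, so that `deriv` applies to it. -/
structure IsLevelOneForm (k : ℕ) (f : ℂ → ℂ) : Prop where
  differentiableOn : DifferentiableOn ℂ f ℍₒ
  map_add_one : ∀ τ ∈ ℍₒ, f (τ + 1) = f τ
  map_neg_one_div : ∀ τ ∈ ℍₒ, f (-1 / τ) = τ ^ k * f τ

namespace IsLevelOneForm

variable {k : ℕ} {f : ℂ → ℂ}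

lemma slash_eq (hf : IsLevelOneForm k f) (γ : SL(2, ℤ)) :
    (fun z : ℍ => f z) ∣[(k : ℤ)] γ = fun z : ℍ => f z := by
  refine SlashInvariantForm.slash_action_generators_SL2Z ?_ ?_ γ
  · ext z
    have hz : (z : ℂ) ≠ 0 := z.ne_zero
    have hS := hf.map_neg_one_div z z.2
    rw [neg_div, one_div] at hS
    rw [ModularForm.SL_slash_apply, ModularGroup.denom_S, modular_S_smul]
    simp only [inv_neg, hS, zpow_neg, zpow_natCast]
    field_simp
  · ext z
    rw [ModularForm.SL_slash_apply, ModularGroup.denom_apply, modular_T_smul]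
    simp [ModularGroup.T, add_comm (1 : ℂ), hf.map_add_one z z.2]

lemma exists_cuspForm (hf : IsLevelOneForm k f) (h₀ : Tendsto f I∞ (𝓝 0)) :
    ∃ F : CuspForm 𝒮ℒ (k : ℤ), ∀ z : ℍ, F z = f z := by
  refine ⟨{ toFun := fun z : ℍ => f z
            slash_action_eq' := ?_
            holo' := ?_
            zero_at_cusps' := ?_ }, fun z => rfl⟩
  · rintro _ ⟨γ, rfl⟩
    exact hf.slash_eq γ
  · rw [UpperHalfPlane.mdifferentiable_iff]
    exact hf.differentiableOn.congr fun z hz => by simp [ofComplex_apply_of_im_pos hz]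
  · intro c hc
    rw [Subgroup.IsArithmetic.isCusp_iff_isCusp_SL2Z] at hc
    rw [OnePoint.isZeroAt_iff_forall_SL2Z hc]
    intro γ _
    exact (hf.slash_eq γ).symm ▸ h₀.comp tendsto_coe_atImInfty

lemma eq_zero_of_lt_twelve (hf : IsLevelOneForm k f) (hk : k < 12) (h₀ : Tendsto f I∞ (𝓝 0)) :
    ∀ τ ∈ ℍₒ, f τ = 0 := by
  obtain ⟨F, hF⟩ := hf.exists_cuspForm h₀
  have hF₀ : F = 0 := rank_zero_iff_forall_zero.mp
    (CuspForm.rank_eq_zero_of_weight_lt_twelve (by exact_mod_cast hk)) F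
  intro τ hτ
  rw [← hF ⟨τ, hτ⟩, hF₀, zero_apply]

lemma ne_zero_of_weight_twelve (hf : IsLevelOneForm 12 f) (h₀ : Tendsto f I∞ (𝓝 0))
    (hne : ∃ τ ∈ ℍₒ, f τ ≠ 0) : ∀ τ ∈ ℍₒ, f τ ≠ 0 := by
  obtain ⟨F, hF⟩ := hf.exists_cuspForm h₀
  obtain ⟨c, rfl⟩ := CuspForm.exists_smul_discriminant_of_weight_eq_twelve F
  have hΔ (τ : ℂ) (hτ : τ ∈ ℍₒ) : f τ = c * ModularForm.discriminant ⟨τ, hτ⟩ :=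
    (hF ⟨τ, hτ⟩).symm
  obtain ⟨τ₀, hτ₀, hne⟩ := hne
  have hc : c ≠ 0 := left_ne_zero_of_mul (hΔ τ₀ hτ₀ ▸ hne)
  exact fun τ hτ => hΔ τ hτ ▸ mul_ne_zero hc (ModularForm.discriminant_ne_zero _)

end IsLevelOneForm

/-! ### Families of modular forms permuted by the modular group -/

/-- A vector-valued modular form of weight `k` for a permutation representation of `SL₂(ℤ)`: a
family of holomorphic functions which `τ ↦ τ + 1` permutes by `σT`, and `τ ↦ -1 / τ` by `σS` up to
the factor `τ ^ k`. As in `IsLevelOneForm`, there is no condition at `i∞`. -/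
structure IsModularFamily {ι : Type*} (k : ℕ) (σT σS : Equiv.Perm ι) (f : ι → ℂ → ℂ) : Prop where
  differentiableOn : ∀ i, DifferentiableOn ℂ (f i) ℍₒ
  map_add_one : ∀ i, ∀ τ ∈ ℍₒ, f i (τ + 1) = f (σT i) τ
  map_neg_one_div : ∀ i, ∀ τ ∈ ℍₒ, f i (-1 / τ) = τ ^ k * f (σS i) τ

/-- The quadratic form `xᵢ xⱼ + xᵢ xₖ - xⱼ xₖ`, for `{i, j, k} = {0, 1, 2}`, on the right-hand side
of the Darboux–Halphen system. -/
def halphenQuadratic (x : Fin 3 → ℂ) (i : Fin 3) : ℂ :=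
  x i * x (i + 1) + x i * x (i + 2) - x (i + 1) * x (i + 2)

lemma halphenQuadratic_eq_sum (x : Fin 3 → ℂ) (i : Fin 3) :
    halphenQuadratic x i =
      2 * x i * (∑ j, x j - x i) - ((∑ j, x j) ^ 2 - ∑ j, x j ^ 2) / 2 := by
  fin_cases i <;> simp only [halphenQuadratic, Fin.sum_univ_three, Fin.zero_eta, Fin.mk_one,
    Fin.reduceFinMk, Fin.reduceAdd, zero_add] <;> ring

lemma halphenQuadratic_comp_perm (x : Fin 3 → ℂ) (σ : Equiv.Perm (Fin 3)) (i : Fin 3) :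
    halphenQuadratic (fun j => x (σ j)) i = halphenQuadratic x (σ i) := by
  rw [halphenQuadratic_eq_sum, halphenQuadratic_eq_sum, Equiv.sum_comp σ x,
    Equiv.sum_comp σ fun j => x j ^ 2]

lemma halphenQuadratic_affine (a b : ℂ) (x : Fin 3 → ℂ) (i : Fin 3) :
    halphenQuadratic (fun j => a * x j + b) i =
      a ^ 2 * halphenQuadratic x i + 2 * a * b * x i + b ^ 2 := by
  simp only [halphenQuadratic]
  ring

lemma halphenQuadratic_const_mul (a : ℂ) (x : Fin 3 → ℂ) (i : Fin 3) :
    halphenQuadratic (fun j => a * x j) i = a ^ 2 * halphenQuadratic x i := by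
  simpa using halphenQuadratic_affine a 0 x i

namespace IsModularFamily

section Symmetric

variable {ι : Type*} [Fintype ι] {k : ℕ} {σT σS : Equiv.Perm ι} {f : ι → ℂ → ℂ}

lemma sum_pow (hf : IsModularFamily k σT σS f) (m : ℕ) :
    IsLevelOneForm (k * m) fun τ => ∑ i, f i τ ^ m where
  differentiableOn := DifferentiableOn.fun_sum fun i _ => (hf.differentiableOn i).pow m
  map_add_one τ hτ := by
    simp only [hf.map_add_one _ τ hτ]
    exact Equiv.sum_comp σT fun i => f i τ ^ m
  map_neg_one_div τ hτ := by
    simp only [hf.map_neg_one_div _ τ hτ, mul_pow, ← pow_mul, ← Finset.mul_sum]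
    rw [Equiv.sum_comp σS fun i => f i τ ^ m]

lemma prod (hf : IsModularFamily k σT σS f) :
    IsLevelOneForm (k * Fintype.card ι) fun τ => ∏ i, f i τ where
  differentiableOn := DifferentiableOn.fun_finsetProd fun i _ => hf.differentiableOn i
  map_add_one τ hτ := by
    simp only [hf.map_add_one _ τ hτ]
    exact Equiv.prod_comp σT fun i => f i τ
  map_neg_one_div τ hτ := by
    simp only [hf.map_neg_one_div _ τ hτ, Finset.prod_mul_distrib, Finset.prod_const,
      Finset.card_univ, ← pow_mul]
    rw [Equiv.prod_comp σS fun i => f i τ]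

end Symmetric

section LogDeriv

variable {ι : Type*} {k : ℕ} {σT σS : Equiv.Perm ι} {f : ι → ℂ → ℂ} {τ : ℂ}

lemma differentiableOn_logDeriv (hf : IsModularFamily k σT σS f)
    (hne : ∀ i, ∀ τ ∈ ℍₒ, f i τ ≠ 0) (i : ι) : DifferentiableOn ℂ (logDeriv (f i)) ℍₒ :=
  ((hf.differentiableOn i).deriv isOpen_upperHalfPlaneSet).div (hf.differentiableOn i) (hne i)

lemma logDeriv_add_one (hf : IsModularFamily k σT σS f) (i : ι) (hτ : τ ∈ ℍₒ) :
    logDeriv (f i) (τ + 1) = logDeriv (f (σT i)) τ := by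
  rw [logDeriv_apply, logDeriv_apply, deriv_add_one_of_eqOn (hf.map_add_one i) hτ,
    hf.map_add_one i τ hτ]

lemma logDeriv_neg_one_div (hf : IsModularFamily k σT σS f) (hne : ∀ i, ∀ τ ∈ ℍₒ, f i τ ≠ 0)
    (i : ι) (hτ : τ ∈ ℍₒ) :
    logDeriv (f i) (-1 / τ) = τ ^ 2 * logDeriv (f (σS i)) τ + k * τ := by
  have hτ₀ := ne_zero_of_mem_upperHalfPlaneSet hτ
  have hdiff : DifferentiableAt ℂ (f (σS i)) τ :=
    (hf.differentiableOn (σS i)).differentiableAt (isOpen_upperHalfPlaneSet.mem_nhds hτ)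
  have hprod : logDeriv (fun z => z ^ k * f (σS i) z) τ = k / τ + logDeriv (f (σS i)) τ := by
    rw [logDeriv_mul (f := fun z => z ^ k) τ (pow_ne_zero k hτ₀) (hne _ τ hτ)
      (differentiableAt_pow k) hdiff, logDeriv_pow]
  rw [logDeriv_apply,
    deriv_neg_one_div_of_eqOn (hf.differentiableOn i) (hf.map_neg_one_div i) hτ,
    hf.map_neg_one_div i τ hτ, smul_eq_mul, mul_div_assoc, ← logDeriv_apply, hprod]
  field_simp
  ring

end LogDeriv

variable {k : ℕ} {σT σS : Equiv.Perm (Fin 3)} {f : Fin 3 → ℂ → ℂ} {τ : ℂ}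

/-- The affine term `k * τ` in the transformation of the logarithmic derivatives cancels in the
defect of the Darboux–Halphen system. -/
lemma mul_deriv_logDeriv_sub_halphenQuadratic (hf : IsModularFamily k σT σS f)
    (hne : ∀ i, ∀ τ ∈ ℍₒ, f i τ ≠ 0) :
    IsModularFamily 4 σT σS fun i τ =>
      k * deriv (logDeriv (f i)) τ - halphenQuadratic (fun j => logDeriv (f j) τ) i where
  differentiableOn i := by
    have hL := hf.differentiableOn_logDeriv hne
    have hL' := (hL i).deriv isOpen_upperHalfPlaneSet
    unfold halphenQuadratic
    fun_prop
  map_add_one i τ hτ := by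
    simp only [hf.logDeriv_add_one _ hτ,
      deriv_add_one_of_eqOn (fun _ => hf.logDeriv_add_one i) hτ]
    rw [halphenQuadratic_comp_perm fun j => logDeriv (f j) τ]
  map_neg_one_div i τ hτ := by
    have hL := ((hf.differentiableOn_logDeriv hne (σS i)).differentiableAt
      (isOpen_upperHalfPlaneSet.mem_nhds hτ)).hasDerivAt
    have hderiv : deriv (fun z => z ^ 2 * logDeriv (f (σS i)) z + k * z) τ =
        2 * τ * logDeriv (f (σS i)) τ + τ ^ 2 * deriv (logDeriv (f (σS i))) τ + k := by
      simpa using (((hasDerivAt_pow 2 τ).fun_mul hL).fun_add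
        ((hasDerivAt_id τ).const_mul (k : ℂ))).deriv
    simp only [hf.logDeriv_neg_one_div hne _ hτ,
      deriv_neg_one_div_of_eqOn (hf.differentiableOn_logDeriv hne i)
        (fun _ => hf.logDeriv_neg_one_div hne i) hτ]
    rw [hderiv, halphenQuadratic_affine,
      halphenQuadratic_comp_perm fun j => logDeriv (f j) τ, smul_eq_mul]
    ring

/-- The power sums of degree one and two vanish, so `(f₁ - f₂)² = -3 (f₁ + f₂)²` and `f₁ - f₂` is a
constant multiple of `f₁ + f₂`; but `τ ↦ τ + 1` changes the sign of the former only. -/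
lemma eq_zero_of_tendsto_zero (hf : IsModularFamily k (Equiv.swap 1 2) σS f) (hk : k < 6)
    (h₀ : ∀ i, Tendsto (f i) I∞ (𝓝 0)) (i : Fin 3) : ∀ τ ∈ ℍₒ, f i τ = 0 := by
  have hpow {m : ℕ} (hm : m ≠ 0) (hkm : k * m < 12) : ∀ τ ∈ ℍₒ, ∑ i, f i τ ^ m = 0 := by
    refine (hf.sum_pow m).eq_zero_of_lt_twelve hkm ?_
    simpa [hm] using tendsto_finsetSum Finset.univ fun i _ => (h₀ i).pow m
  have hsum : ∀ τ ∈ ℍₒ, f 0 τ + f 1 τ + f 2 τ = 0 := by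
    simpa [Fin.sum_univ_three] using hpow one_ne_zero (by omega)
  have hsq : ∀ τ ∈ ℍₒ, f 0 τ ^ 2 + f 1 τ ^ 2 + f 2 τ ^ 2 = 0 := by
    simpa [Fin.sum_univ_three] using hpow two_ne_zero (by omega)
  obtain ⟨ν, hν, hprop⟩ : ∃ ν : ℂ, ν ^ 2 = -3 ∧ ∀ τ ∈ ℍₒ, f 1 τ - f 2 τ = ν * (f 1 τ + f 2 τ) :=
    exists_sq_eq_and_forall_eq_mul ((hf.differentiableOn 1).sub (hf.differentiableOn 2))
      ((hf.differentiableOn 1).add (hf.differentiableOn 2)) fun τ hτ => by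
        linear_combination 2 * hsq τ hτ - 2 * (f 0 τ - f 1 τ - f 2 τ) * hsum τ hτ
  have hν₀ : ν ≠ 0 := by
    rintro rfl
    norm_num at hν
  intro τ hτ
  have hT : f 2 τ - f 1 τ = ν * (f 2 τ + f 1 τ) := by
    have hτ₁ : τ + 1 ∈ ℍₒ := by simpa [upperHalfPlaneSet] using hτ
    simpa [hf.map_add_one _ τ hτ] using hprop (τ + 1) hτ₁
  have hadd : f 1 τ + f 2 τ = 0 := by
    refine (mul_eq_zero.mp ?_).resolve_left hν₀
    linear_combination -(hT + hprop τ hτ) / 2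
  have hsub : f 1 τ - f 2 τ = 0 := by rw [hprop τ hτ, hadd, mul_zero]
  have h₀₁₂ := hsum τ hτ
  have h₁ : f 1 τ = 0 := by linear_combination (hadd + hsub) / 2
  have h₂ : f 2 τ = 0 := by linear_combination (hadd - hsub) / 2
  fin_cases i <;> simp_all

theorem mul_deriv_logDeriv_eq_halphenQuadratic (hf : IsModularFamily k (Equiv.swap 1 2) σS f)
    (hne : ∀ i, ∀ τ ∈ ℍₒ, f i τ ≠ 0) {l : Fin 3 → ℂ}
    (hl : ∀ i, Tendsto (logDeriv (f i)) I∞ (𝓝 (l i))) (hl₀ : ∀ i, halphenQuadratic l i = 0)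
    (i : Fin 3) (hτ : τ ∈ ℍₒ) :
    k * deriv (logDeriv (f i)) τ = halphenQuadratic (fun j => logDeriv (f j) τ) i := by
  refine sub_eq_zero.mp ((hf.mul_deriv_logDeriv_sub_halphenQuadratic hne).eq_zero_of_tendsto_zero
    (by norm_num) (fun i => ?_) i τ hτ)
  have hquad : Tendsto (fun τ => halphenQuadratic (fun j => logDeriv (f j) τ) i) I∞ (𝓝 0) :=
    hl₀ i ▸ (((hl i).mul (hl (i + 1))).add ((hl i).mul (hl (i + 2)))).sub
      ((hl (i + 1)).mul (hl (i + 2)))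
  simpa using ((tendsto_deriv_comap_im_atTop
    (hf.differentiableOn_logDeriv hne i) (hl i)).const_mul (k : ℂ)).sub hquad

end IsModularFamily

/-! ### Theta constants -/

lemma jacobiTheta₂_add_one_right (z τ : ℂ) :
    jacobiTheta₂ z (τ + 1) = jacobiTheta₂ (z + 1 / 2) τ := by
  refine tsum_congr fun n => exp_eq_exp_iff_exists_int.mpr ?_
  obtain ⟨k, hk⟩ := Int.even_mul_pred_self n
  have hk' : (n : ℂ) * (n - 1) = k + k := by exact_mod_cast hk
  exact ⟨k, by linear_combination π * I * hk'⟩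

lemma jacobiTheta₂_div_neg_one_div (z : ℂ) {τ : ℂ} (hτ : τ ≠ 0) :
    jacobiTheta₂ (z / τ) (-1 / τ) =
      (-I * τ) ^ (1 / 2 : ℂ) * (cexp (π * I * z ^ 2 / τ) * jacobiTheta₂ z τ) := by
  have hsqrt : (-I * τ) ^ (1 / 2 : ℂ) ≠ 0 := by simp [cpow_eq_zero_iff, hτ]
  have hexp : -π * I * z ^ 2 / τ = -(π * I * z ^ 2 / τ) := by ring
  rw [jacobiTheta₂_functional_equation z τ, hexp, Complex.exp_neg]
  field_simp [hsqrt, Complex.exp_ne_zero]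

lemma tendsto_jacobiTheta₂_mul_comap_im_atTop {a : ℝ} {s : Finset ℤ}
    (ha : ∀ n : ℤ, 0 ≤ n * (n + a)) (hs : ∀ n : ℤ, n * (n + a) = 0 ↔ n ∈ s) :
    Tendsto (fun τ => jacobiTheta₂ (a * τ / 2) τ) I∞ (𝓝 s.card) := by
  have hterm (n : ℤ) (τ : ℂ) :
      jacobiTheta₂_term n (a * τ / 2) τ = cexp (I * (π * (n * (n + a)) : ℝ) * τ) := by
    rw [jacobiTheta₂_term]
    congr 1
    push_cast
    ring
  have hsum : Summable fun n : ℤ => Real.exp (-(π * (n * (n + a)))) := by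
    have hnorm := ((summable_jacobiTheta₂_term_iff (a * I / 2) I).mpr (by simp)).norm
    simpa [hterm, norm_exp] using hnorm
  simp only [jacobiTheta₂, hterm]
  exact tendsto_tsum_cexp_mul_I_comap_im_atTop (fun n => mul_nonneg Real.pi_pos.le (ha n))
    (fun n => by rw [mul_eq_zero_iff_left Real.pi_ne_zero, hs]) hsum

lemma tendsto_jacobiTheta₂_zero : Tendsto (jacobiTheta₂ 0) I∞ (𝓝 1) := by
  simpa using tendsto_jacobiTheta₂_mul_comap_im_atTop (a := 0) (s := {0})
    (fun n => by simpa using mul_self_nonneg (n : ℝ)) (by simp)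

lemma tendsto_jacobiTheta₂_one_half : Tendsto (jacobiTheta₂ (1 / 2)) I∞ (𝓝 1) := by
  have hshift : Tendsto (fun τ : ℂ => τ + 1) I∞ I∞ :=
    tendsto_comap_iff.mpr (by simpa [Function.comp_def] using tendsto_comap)
  simpa [Function.comp_def, jacobiTheta₂_add_one_right] using
    tendsto_jacobiTheta₂_zero.comp hshift

lemma tendsto_jacobiTheta₂_half_period : Tendsto (fun τ => jacobiTheta₂ (τ / 2) τ) I∞ (𝓝 2) := by
  have hnonneg (n : ℤ) : 0 ≤ n * (n + 1) := by
    rcases le_or_gt 0 n with hn | hn <;> nlinarith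
  simpa using tendsto_jacobiTheta₂_mul_comap_im_atTop (a := 1) (s := {0, -1})
    (fun n => by exact_mod_cast hnonneg n)
    (fun n => by
      norm_cast
      simp [add_eq_zero_iff_eq_neg])

lemma differentiableOn_jacobiTheta₂_half_period :
    DifferentiableOn ℂ (fun τ => jacobiTheta₂ (τ / 2) τ) ℍₒ := fun τ hτ =>
  ((hasFDerivAt_jacobiTheta₂ (τ / 2) hτ).differentiableAt.comp (f := fun t : ℂ => (t / 2, t)) τ
    (by fun_prop)).differentiableWithinAt

/-- The theta constants, classically denoted `θ₂`, `θ₃` and `θ₄`, in this order. -/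
def thetaNull : Fin 3 → ℂ → ℂ :=
  ![fun τ => cexp (π * I / 4 * τ) * jacobiTheta₂ (τ / 2) τ, jacobiTheta₂ 0, jacobiTheta₂ (1 / 2)]

lemma theta_eq_thetaNull_one : θ = thetaNull 1 := by
  ext τ
  simp [θ, thetaNull, jacobiTheta₂, jacobiTheta₂_term]

lemma differentiableOn_thetaNull (i : Fin 3) : DifferentiableOn ℂ (thetaNull i) ℍₒ := by
  have hθ (z : ℂ) : DifferentiableOn ℂ (jacobiTheta₂ z) ℍₒ := fun τ hτ =>
    (differentiableAt_jacobiTheta₂_snd z hτ).differentiableWithinAt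
  fin_cases i
  · exact DifferentiableOn.fun_mul (by fun_prop) differentiableOn_jacobiTheta₂_half_period
  · exact hθ 0
  · exact hθ (1 / 2)

lemma differentiableAt_thetaNull (i : Fin 3) {τ : ℂ} (hτ : τ ∈ ℍₒ) :
    DifferentiableAt ℂ (thetaNull i) τ :=
  (differentiableOn_thetaNull i).differentiableAt (isOpen_upperHalfPlaneSet.mem_nhds hτ)

lemma thetaNull_neg_one_div (i : Fin 3) {τ : ℂ} (hτ : τ ≠ 0) :
    thetaNull i (-1 / τ) = (-I * τ) ^ (1 / 2 : ℂ) * thetaNull (Equiv.swap 0 2 i) τ := by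
  fin_cases i
  · have hz : -1 / τ / 2 = -(1 / 2 / τ) := by ring
    have hexp : cexp (π * I / 4 * (-1 / τ)) * cexp (π * I * (1 / 2) ^ 2 / τ) = 1 := by
      rw [← Complex.exp_add, exp_eq_one_iff]
      exact ⟨0, by ring⟩
    simp only [thetaNull, Fin.zero_eta, Equiv.swap_apply_left, Matrix.cons_val]
    rw [hz, jacobiTheta₂_neg_left, jacobiTheta₂_div_neg_one_div _ hτ]
    linear_combination ((-I * τ) ^ (1 / 2 : ℂ) * jacobiTheta₂ (1 / 2) τ) * hexp
  · simpa [thetaNull, Equiv.swap_apply_of_ne_of_ne] using jacobiTheta₂_div_neg_one_div 0 hτ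
  · have hz : τ / 2 / τ = 1 / 2 := by field_simp
    have hexp : π * I * (τ / 2) ^ 2 / τ = π * I / 4 * τ := by field_simp; ring
    simpa [thetaNull, hz, hexp] using jacobiTheta₂_div_neg_one_div (τ / 2) hτ

lemma thetaNull_zero_add_one (τ : ℂ) :
    thetaNull 0 (τ + 1) = cexp (π * I / 4) * thetaNull 0 τ := by
  have hz : (τ + 1) / 2 + 1 / 2 = τ / 2 + 1 := by ring
  simp only [thetaNull, Matrix.cons_val, jacobiTheta₂_add_one_right, hz, jacobiTheta₂_add_left,
    mul_add, mul_one, Complex.exp_add]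
  ring

lemma thetaNull_one_add_one (τ : ℂ) : thetaNull 1 (τ + 1) = thetaNull 2 τ := by
  simp [thetaNull, jacobiTheta₂_add_one_right]

lemma thetaNull_two_add_one (τ : ℂ) : thetaNull 2 (τ + 1) = thetaNull 1 τ := by
  simp only [thetaNull, Matrix.cons_val, jacobiTheta₂_add_one_right, add_halves]
  simpa using jacobiTheta₂_add_left 0 τ

lemma isModularFamily_thetaNull_pow_eight :
    IsModularFamily 4 (Equiv.swap 1 2) (Equiv.swap 0 2) fun i τ => thetaNull i τ ^ 8 where
  differentiableOn i := (differentiableOn_thetaNull i).pow 8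
  map_add_one i τ _ := by
    fin_cases i
    · have hexp : cexp (π * I / 4) ^ 8 = 1 := by
        rw [← Complex.exp_nat_mul, ← Complex.exp_two_pi_mul_I]
        ring_nf
      simp [thetaNull_zero_add_one, mul_pow, hexp, Equiv.swap_apply_of_ne_of_ne]
    · simp [thetaNull_one_add_one]
    · simp [thetaNull_two_add_one]
  map_neg_one_div i τ hτ := by
    have hsqrt : ((-I * τ) ^ (1 / 2 : ℂ)) ^ 8 = τ ^ 4 := by
      have hexp : ((8 : ℕ) : ℂ) * (1 / 2) = (4 : ℕ) := by norm_num
      rw [← cpow_nat_mul, hexp, cpow_natCast, mul_pow, Even.neg_pow (by decide), I_pow_four,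
        one_mul]
    rw [thetaNull_neg_one_div i (ne_zero_of_mem_upperHalfPlaneSet hτ), mul_pow, hsqrt]

lemma tendsto_thetaNull (i : Fin 3) : Tendsto (thetaNull i) I∞ (𝓝 (![0, 1, 1] i)) := by
  fin_cases i
  · have hexp : Tendsto (fun τ : ℂ => cexp (π * I / 4 * τ)) I∞ (𝓝 0) :=
      (tendsto_cexp_mul_I_comap_im_atTop (c := π / 4) (by positivity)).congr fun τ => by
        push_cast
        ring_nf
    exact zero_mul (2 : ℂ) ▸ hexp.mul tendsto_jacobiTheta₂_half_period
  · exact tendsto_jacobiTheta₂_zero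
  · exact tendsto_jacobiTheta₂_one_half

lemma eventually_thetaNull_ne_zero (i : Fin 3) : ∀ᶠ τ in I∞, thetaNull i τ ≠ 0 := by
  fin_cases i
  · filter_upwards [tendsto_jacobiTheta₂_half_period.eventually_ne two_ne_zero] with τ hτ
    exact mul_ne_zero (Complex.exp_ne_zero _) hτ
  · exact tendsto_jacobiTheta₂_zero.eventually_ne one_ne_zero
  · exact tendsto_jacobiTheta₂_one_half.eventually_ne one_ne_zero

/-- The product of the eighth powers is a multiple of the discriminant. -/
lemma thetaNull_ne_zero (i : Fin 3) {τ : ℂ} (hτ : τ ∈ ℍₒ) : thetaNull i τ ≠ 0 := by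
  have hform : IsLevelOneForm 12 fun τ => ∏ i, thetaNull i τ ^ 8 :=
    isModularFamily_thetaNull_pow_eight.prod
  have hlim : Tendsto (fun τ => ∏ i, thetaNull i τ ^ 8) I∞ (𝓝 0) := by
    simpa [Fin.prod_univ_three] using
      tendsto_finsetProd Finset.univ fun i _ => (tendsto_thetaNull i).pow 8
  have hne : ∃ τ ∈ ℍₒ, ∏ i, thetaNull i τ ^ 8 ≠ 0 := by
    obtain ⟨τ₀, hτ₀, hne₀⟩ := (eventually_mem_upperHalfPlaneSet.and
      (eventually_all.mpr eventually_thetaNull_ne_zero)).exists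
    exact ⟨τ₀, hτ₀, Finset.prod_ne_zero_iff.mpr fun i _ => pow_ne_zero 8 (hne₀ i)⟩
  have hprod := hform.ne_zero_of_weight_twelve hlim hne τ hτ
  exact ne_zero_pow (by norm_num) (Finset.prod_ne_zero_iff.mp hprod i (Finset.mem_univ i))

lemma logDeriv_thetaNull_zero {τ : ℂ} (hτ : τ ∈ ℍₒ) :
    logDeriv (thetaNull 0) τ = π * I / 4 + logDeriv (fun z => jacobiTheta₂ (z / 2) z) τ := by
  have hexp : logDeriv (fun z => cexp (π * I / 4 * z)) τ = π * I / 4 := by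
    rw [logDeriv_apply, ((hasDerivAt_id' τ).const_mul (π * I / 4)).cexp.deriv, mul_one]
    exact mul_div_cancel_left₀ _ (Complex.exp_ne_zero _)
  rw [← hexp]
  exact logDeriv_mul (f := fun z => cexp (π * I / 4 * z)) (g := fun z => jacobiTheta₂ (z / 2) z) τ
    (Complex.exp_ne_zero _) (right_ne_zero_of_mul (thetaNull_ne_zero 0 hτ)) (by fun_prop)
    (differentiableOn_jacobiTheta₂_half_period.differentiableAt
      (isOpen_upperHalfPlaneSet.mem_nhds hτ))

lemma tendsto_logDeriv_thetaNull (i : Fin 3) :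
    Tendsto (logDeriv (thetaNull i)) I∞ (𝓝 (![π * I / 4, 0, 0] i)) := by
  fin_cases i
  · have hhalf := (tendsto_logDeriv_comap_im_atTop differentiableOn_jacobiTheta₂_half_period
      tendsto_jacobiTheta₂_half_period two_ne_zero).const_add (π * I / 4)
    refine (hhalf.congr' ?_).trans_eq (by simp)
    exact eventually_mem_upperHalfPlaneSet.mono fun τ hτ => (logDeriv_thetaNull_zero hτ).symm
  · exact tendsto_logDeriv_comap_im_atTop (differentiableOn_thetaNull 1) (tendsto_thetaNull 1)
      one_ne_zero
  · exact tendsto_logDeriv_comap_im_atTop (differentiableOn_thetaNull 2) (tendsto_thetaNull 2)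
      one_ne_zero

lemma hasDerivAt_thetaNull (i : Fin 3) {τ : ℂ} (hτ : τ ∈ ℍₒ) :
    HasDerivAt (thetaNull i) (thetaNull i τ * logDeriv (thetaNull i) τ) τ :=
  (differentiableAt_thetaNull i hτ).hasDerivAt.congr_deriv
    (mul_div_cancel₀ _ (thetaNull_ne_zero i hτ)).symm

theorem hasDerivAt_logDeriv_thetaNull (i : Fin 3) {τ : ℂ} (hτ : τ ∈ ℍₒ) :
    HasDerivAt (logDeriv (thetaNull i))
      (2 * halphenQuadratic (fun j => logDeriv (thetaNull j) τ) i) τ := by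
  have hpow (j : Fin 3) :
      Set.EqOn (logDeriv fun z => thetaNull j z ^ 8) (fun z => 8 * logDeriv (thetaNull j) z) ℍₒ :=
    fun z hz => by simpa using logDeriv_fun_pow (differentiableAt_thetaNull j hz) 8
  have hlim (j : Fin 3) : Tendsto (logDeriv fun z => thetaNull j z ^ 8) I∞
      (𝓝 (8 * ![π * I / 4, 0, 0] j)) :=
    ((tendsto_logDeriv_thetaNull j).const_mul 8).congr'
      (eventually_mem_upperHalfPlaneSet.mono fun z hz => (hpow j hz).symm)
  have hlim₀ (j : Fin 3) : halphenQuadratic (fun i => 8 * ![π * I / 4, 0, 0] i) j = 0 := by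
    fin_cases j <;> simp [halphenQuadratic]
  have hdiff : DifferentiableAt ℂ (logDeriv (thetaNull i)) τ :=
    (((differentiableOn_thetaNull i).deriv isOpen_upperHalfPlaneSet).div
      (differentiableOn_thetaNull i) fun z hz => thetaNull_ne_zero i hz).differentiableAt
        (isOpen_upperHalfPlaneSet.mem_nhds hτ)
  have hhalphen := isModularFamily_thetaNull_pow_eight.mul_deriv_logDeriv_eq_halphenQuadratic
    (fun j z hz => pow_ne_zero 8 (thetaNull_ne_zero j hz)) hlim hlim₀ i hτ
  simp only [(hpow i).deriv isOpen_upperHalfPlaneSet hτ, hpow _ hτ,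
    deriv_const_mul_field, halphenQuadratic_const_mul] at hhalphen
  refine hdiff.hasDerivAt.congr_deriv ?_
  push_cast at hhalphen
  linear_combination hhalphen / 32

/-- The Jacobi theta constant satisfies a fourth-order nonlinear ODE
(derivatives are ordinary derivatives with respect to `τ`). -/
theorem theta_fourth_order_ODE :
    ∀ τ : ℂ, 0 < τ.im →
      θ τ ^ 3 * (θ τ * deriv (deriv θ) τ - 3 * (deriv θ τ) ^ 2) *
          deriv (deriv (deriv (deriv θ))) τ -
        θ τ ^ 4 * (deriv (deriv (deriv θ)) τ) ^ 2 +
        2 * θ τ ^ 2 * deriv θ τ * (θ τ * deriv (deriv θ) τ + 12 * (deriv θ τ) ^ 2) *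
          deriv (deriv (deriv θ)) τ +
        θ τ ^ 3 * (deriv (deriv θ) τ) ^ 3 -
        24 * θ τ ^ 2 * (deriv θ τ) ^ 2 * (deriv (deriv θ) τ) ^ 2 -
        18 * θ τ * (deriv θ τ) ^ 4 * deriv (deriv θ) τ +
        18 * (deriv θ τ) ^ 6 = 0 := by
  rw [theta_eq_thetaNull_one]
  exact fourth_order_ODE_of_halphen isOpen_upperHalfPlaneSet
    (fun _ => hasDerivAt_thetaNull 1)
    (fun _ => hasDerivAt_logDeriv_thetaNull 1)
    (fun _ => hasDerivAt_logDeriv_thetaNull 2)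
    (fun _ => hasDerivAt_logDeriv_thetaNull 0)
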